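/- Fix an integer n ≥ 1 and p ∈ (1,∞), and define the weight v = (Mw/w)^p · w on supp(w) (and v = 0 off supp(w)). Then there is a constant C = C(n,p) such that for every measurable function f supported in supp(w), ‖Mf‖_{L^p(w)} ≤ C ‖f‖_{L^p(v)}. -/

import Mathlib

open MeasureTheory Set ENNReal

noncomputable section

/-- The half-open axis-parallel cube with corner `a` and side length `l`. -/
def Cube (n : ℕ) (a : Fin n → ℝ) (l : ℝ) : Set (Fin n → ℝ) :=
  Set.univ.pi fun i => Set.Ico (a i) (a i + l)

/-- The uncentered Hardy–Littlewood maximal function over axis-parallel cubes: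
`Mg(x) = sup_{Q ∋ x} |Q|⁻¹ ∫_Q g`. -/
def MaxFn {n : ℕ} (g : (Fin n → ℝ) → ℝ≥0∞) (x : Fin n → ℝ) : ℝ≥0∞ :=
  ⨆ (a : Fin n → ℝ) (l : ℝ) (_ : 0 < l) (_ : x ∈ Cube n a l),
    (volume (Cube n a l))⁻¹ * ∫⁻ y in Cube n a l, g y

/-- The cube of the sparse family `S` with parameters `k, N`:
`[0, 2^{-N})^n` for `k = 0` and `[2^k, 2^k + 2^{-N})^n` for `k ≥ 1`. -/
def sCube (n k N : ℕ) : Set (Fin n → ℝ) :=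
  Cube n (fun _ => if k = 0 then 0 else (2:ℝ)^k) ((2:ℝ)^(-(N:ℤ)))

/-- The sparse operator `T_S g = Σ_{Q ∈ S} (|Q|⁻¹ ∫_Q g) 1_Q`. -/
def TS {n : ℕ} (g : (Fin n → ℝ) → ℝ≥0∞) (x : Fin n → ℝ) : ℝ≥0∞ :=
  ∑' q : ℕ × ℕ,
    (sCube n q.1 q.2).indicator
      (fun _ => (volume (sCube n q.1 q.2))⁻¹ * ∫⁻ y in sCube n q.1 q.2, g y) x

/-- The `j`-th digit (for `j ≥ 1`) of `t ∈ [0,1)` in base `2^k`, using the expansion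
which is not eventually constant `2^k - 1`. -/
def digit (k j : ℕ) (t : ℝ) : ℤ := ⌊t * 2^(k*j)⌋ % 2^k

/-- `Ω_m(k) ⊆ [0,1)^n`: the points all of whose coordinates have base-`2^k` digits
in `{0, …, 2^{k-1}-1}` for `1 ≤ j ≤ m-1`, with `m`-th digit equal to `2^{k-1}`. -/
def Omega (n k m : ℕ) : Set (Fin n → ℝ) :=
  {x | (∀ i, x i ∈ Set.Ico (0:ℝ) 1) ∧
    ∀ i, (∀ j, 1 ≤ j → j < m → digit k j (x i) < 2^(k-1)) ∧
      digit k m (x i) = 2^(k-1)}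

/-- The weight `w_k = Σ_{m ≥ 1} (2^{kn}/(2^{(k-1)n}+1))^m 1_{Ω_m(k)}`. -/
def wk (n k : ℕ) : (Fin n → ℝ) → ℝ≥0∞ := fun x =>
  ∑' m : ℕ,
    (Omega n k (m+1)).indicator
      (fun _ => ((2:ℝ≥0∞)^(k*n) / ((2:ℝ≥0∞)^((k-1)*n) + 1))^(m+1)) x

/-- `Q_1^m(k) = [2^{-k(m-1)-1}, 2^{-k(m-1)-1} + 2^{-km})^n`. -/
def Q1 (n k m : ℕ) : Set (Fin n → ℝ) :=
  Cube n (fun _ => (2:ℝ)^(-(k*(m-1) : ℤ) - 1)) ((2:ℝ)^(-(k*m : ℤ)))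

/-- `Γ(k) = ⋃_{m ≥ 3} Q_1^m(k)`. -/
def Gamma (n k : ℕ) : Set (Fin n → ℝ) := ⋃ m : ℕ, Q1 n k (m+3)

/-- `A_k = 2^{(k-1)n} (2^{(k-1)n}+1)^2`. -/
def Ak (n k : ℕ) : ℝ≥0∞ := 2^((k-1)*n) * (2^((k-1)*n) + 1)^2

/-- The weight `w(x) = Σ_{k ≥ 3} A_k w_k(x - 2⃗^k) 1_{Γ(k)}(x - 2⃗^k)`. -/
def bigW (n : ℕ) : (Fin n → ℝ) → ℝ≥0∞ := fun x =>
  ∑' k : ℕ,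
    (Gamma n (k+3)).indicator (fun z => Ak n (k+3) * wk n (k+3) z)
      (fun i => x i - (2:ℝ)^(k+3))

/-- The test function `f(x) = Σ_{k ≥ 3} k^{-ε} A_k w_k(x - 2⃗^k)`. -/
def bigF (n : ℕ) (ε : ℝ) : (Fin n → ℝ) → ℝ≥0∞ := fun x =>
  ∑' k : ℕ,
    ((k+3 : ℝ≥0∞) ^ (-ε)) * Ak n (k+3) * wk n (k+3) (fun i => x i - (2:ℝ)^(k+3))

/-- `T` is bounded from `L^p(v)` to `L^p(u)` (for nonnegative functions, which are
required to be supported in `supp v`): there is a finite constant `C` with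
`‖Tf‖_{L^p(u)} ≤ C ‖f‖_{L^p(v)}` for all `f ∈ L^p(v)`. -/
def BddOn {n : ℕ} (T : ((Fin n → ℝ) → ℝ≥0∞) → (Fin n → ℝ) → ℝ≥0∞)
    (p : ℝ) (v u : (Fin n → ℝ) → ℝ≥0∞) : Prop :=
  ∃ C : ℝ≥0∞, C ≠ ∞ ∧ ∀ f : (Fin n → ℝ) → ℝ≥0∞, Measurable f →
    (∀ x, v x = 0 → f x = 0) → (∫⁻ x, f x ^ p * v x) < ∞ →
    ∫⁻ x, T f x ^ p * u x ≤ C ^ p * ∫⁻ x, f x ^ p * v x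

/-- The dual weight `u^{1-p'} 1_{supp u}`. -/
def dualW {n : ℕ} (u : (Fin n → ℝ) → ℝ≥0∞) (q : ℝ) : (Fin n → ℝ) → ℝ≥0∞ :=
  fun x => if u x = 0 then 0 else u x ^ (1 - q)

open scoped NNReal
open Function (onFun)

/-!
The weight `w` is constant on each of the disjoint cubes `E` making up its support, and these cubes
are so sparse that a cube `Q` meeting two of them has side length comparable to the smallest dyadic
cube containing `Q ∩ supp w`. So, at a point of `E`, an average of `f` over a cube is controlled
either by `M(f 1_E)` or by the dyadic maximal function `M_d f`.

The first term is handled by the unweighted Hardy–Littlewood theorem on each `E`, where `w` is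
constant, together with `w ≤ v`. For the second, `M_d w` dominates the average of `w` over every
dyadic cube containing the point, so `M_d f ≤ M_d^w (f M_d w / w)`, where `M_d^w` averages against
`w dx`. Dyadic cubes being nested or disjoint, `M_d^w` is bounded on `L^p(w)` for an arbitrary
weight, which leaves `∫ f^p (M_d w / w)^p w ≤ ∫ f^p v`.
-/

section DyadicSums

theorem tsum_dyadic_rpow_le {q : ℝ} (hq : 0 < q) (a : ℝ≥0∞) :
    ∑' j : ℤ, (Iio a).indicator (· ^ q) ((2 : ℝ≥0∞) ^ j) ≤ (1 - 2 ^ (-q))⁻¹ * a ^ q := by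
  rcases eq_or_ne a 0 with rfl | h0
  · simp
  rcases eq_or_ne a ∞ with rfl | htop
  · rw [top_rpow_of_pos hq, mul_top (by simp)]
    exact le_top
  obtain ⟨J, hJ, hJ'⟩ := exists_mem_Ioc_zpow h0 htop one_lt_two ofNat_ne_top
  have hinj : Function.Injective fun i : ℕ => J - (i : ℤ) := fun i j h => by simpa using h
  have hsupp : (Function.support fun j : ℤ => (Iio a).indicator (· ^ q) ((2 : ℝ≥0∞) ^ j)) ⊆
      range fun i : ℕ => J - (i : ℤ) := by
    intro j hj
    have hlt : (2 : ℝ≥0∞) ^ j < 2 ^ (J + 1) := (mem_of_indicator_ne_zero hj).trans_le hJ'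
    have : j < J + 1 := lt_of_not_ge fun h => hlt.not_ge (zpow_le_of_le one_le_two h)
    exact ⟨(J - j).toNat, by simp only; lia⟩
  rw [← hinj.tsum_eq hsupp, ← ENNReal.tsum_geometric, ← ENNReal.tsum_mul_right]
  refine ENNReal.tsum_le_tsum fun i => (indicator_le_self _ _ _).trans ?_
  calc ((2 : ℝ≥0∞) ^ (J - (i : ℤ))) ^ q = (2 ^ (-q)) ^ i * (2 ^ J) ^ q := by
        simp only [← rpow_intCast, ← rpow_natCast, ← rpow_mul]
        rw [← rpow_add _ _ two_ne_zero ofNat_ne_top]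
        congr 1
        push_cast
        ring
    _ ≤ (2 ^ (-q)) ^ i * a ^ q := by gcongr

theorem rpow_le_tsum_dyadic {q : ℝ} (hq : 0 < q) (a : ℝ≥0∞) :
    a ^ q ≤ 2 ^ q * ∑' j : ℤ, (Iio a).indicator (· ^ q) ((2 : ℝ≥0∞) ^ j) := by
  rcases eq_or_ne a 0 with rfl | h0
  · simp [hq]
  rcases eq_or_ne a ∞ with rfl | htop
  · have hterm (i : ℕ) : 1 ≤ (Iio ∞).indicator (· ^ q) ((2 : ℝ≥0∞) ^ (i : ℤ)) := by
      rw [indicator_of_mem (by simp), zpow_natCast]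
      exact one_le_rpow (one_le_pow₀ one_le_two) hq
    have hsum : ∑' j : ℤ, (Iio ∞).indicator (· ^ q) ((2 : ℝ≥0∞) ^ j) = ∞ := by
      refine top_le_iff.1 ?_
      calc ∞ = ∑' _ : ℕ, 1 := (ENNReal.tsum_const_eq_top_of_ne_zero one_ne_zero).symm
        _ ≤ _ := ENNReal.tsum_le_tsum hterm
        _ ≤ _ := ENNReal.tsum_comp_le_tsum_of_injective Nat.cast_injective _
    rw [hsum, mul_top (by simp)]
    exact le_top
  obtain ⟨J, hJ, hJ'⟩ := exists_mem_Ioc_zpow h0 htop one_lt_two ofNat_ne_top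
  calc a ^ q ≤ (2 * 2 ^ J) ^ q := by
        refine rpow_le_rpow (hJ'.trans_eq ?_) hq.le
        rw [ENNReal.zpow_add two_ne_zero ofNat_ne_top, zpow_one, mul_comm]
    _ = 2 ^ q * (Iio a).indicator (· ^ q) ((2 : ℝ≥0∞) ^ J) := by
        rw [mul_rpow_of_nonneg _ _ hq.le, indicator_of_mem (mem_Iio.2 hJ)]
    _ ≤ 2 ^ q * ∑' j : ℤ, (Iio a).indicator (· ^ q) ((2 : ℝ≥0∞) ^ j) := by
        gcongr
        exact ENNReal.le_tsum J

end DyadicSums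

section Marcinkiewicz

variable {α : Type*} [MeasurableSpace α] {μ : Measure α}

/-- The constant in the strong `(p, p)` bound which interpolation extracts from a weak `(1, 1)`
bound with constant `K`. -/
def strongConst (K : ℝ≥0∞) (p : ℝ) : ℝ≥0∞ := 4 ^ p * K * (1 - 2 ^ (-(p - 1)))⁻¹

theorem strongConst_ne_top {K : ℝ≥0∞} (hK : K ≠ ∞) {p : ℝ} (hp : 1 < p) :
    strongConst K p ≠ ∞ := by
  refine mul_ne_top (mul_ne_top (by simp [rpow_eq_top_iff]) hK) (inv_ne_top.2 ?_)
  exact (tsub_pos_of_lt (rpow_lt_one_of_one_lt_of_neg one_lt_two (by linarith))).ne'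

theorem strongConst_ne_zero {K : ℝ≥0∞} (hK : K ≠ 0) (p : ℝ) : strongConst K p ≠ 0 := by
  simp [strongConst, hK, rpow_eq_zero_iff, sub_eq_top_iff]

theorem rpow_sub_one_mul_self {p : ℝ} (hp : 1 ≤ p) (t : ℝ≥0∞) : t ^ (p - 1) * t = t ^ p := by
  simpa using (rpow_add_of_nonneg (x := t) (p - 1) 1 (sub_nonneg.2 hp) zero_le_one).symm

theorem lintegral_indicator_Iio_rpow_le {u h : α → ℝ≥0∞} (hu : Measurable u) (hh : Measurable h)
    {K t : ℝ≥0∞} {p : ℝ} (hp : 1 ≤ p)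
    (weak : t * μ {x | 2 * t < u x} ≤ K * ∫⁻ x in {x | t < h x}, h x ∂μ) :
    ∫⁻ x, (Iio (u x / 2)).indicator (· ^ p) t ∂μ
      ≤ K * ∫⁻ x, (Iio (h x)).indicator (· ^ (p - 1)) t * h x ∂μ := by
  have hset : {x | t < u x / 2} = {x | 2 * t < u x} := by
    ext x
    simp [ENNReal.lt_div_iff_mul_lt, mul_comm]
  calc ∫⁻ x, (Iio (u x / 2)).indicator (· ^ p) t ∂μ
      = ∫⁻ x, {x | 2 * t < u x}.indicator (fun _ => t ^ p) x ∂μ := by rw [← hset]; rfl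
    _ = t ^ (p - 1) * (t * μ {x | 2 * t < u x}) := by
        rw [lintegral_indicator_const (measurableSet_lt measurable_const hu), ← mul_assoc,
          rpow_sub_one_mul_self hp]
    _ ≤ t ^ (p - 1) * (K * ∫⁻ x in {x | t < h x}, h x ∂μ) := by gcongr
    _ = K * ∫⁻ x in {x | t < h x}, t ^ (p - 1) * h x ∂μ := by
        rw [lintegral_const_mul _ hh, mul_left_comm]
    _ = K * ∫⁻ x, (Iio (h x)).indicator (· ^ (p - 1)) t * h x ∂μ := by
        rw [← lintegral_indicator (measurableSet_lt measurable_const hh)]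
        congr! with x
        exact indicator_mul_left {x | t < h x} (fun _ => t ^ (p - 1)) h

-- Marcinkiewicz interpolation with `L^∞`: the weak bound is summed over the levels `t = 2 ^ j`.
theorem lintegral_rpow_le_of_weak_type {u h : α → ℝ≥0∞} (hu : Measurable u) (hh : Measurable h)
    {K : ℝ≥0∞} {p : ℝ} (hp : 1 < p)
    (weak : ∀ t, t * μ {x | 2 * t < u x} ≤ K * ∫⁻ x in {x | t < h x}, h x ∂μ) :
    ∫⁻ x, u x ^ p ∂μ ≤ strongConst K p * ∫⁻ x, h x ^ p ∂μ := by
  have hp0 : 0 < p := by linarith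
  have measurable_level {v : α → ℝ≥0∞} (hv : Measurable v) (q : ℝ) (t : ℝ≥0∞) :
      Measurable fun x => (Iio (v x)).indicator (· ^ q) t :=
    (measurable_const (a := t ^ q)).indicator (measurableSet_lt measurable_const hv)
  calc ∫⁻ x, u x ^ p ∂μ
      ≤ ∫⁻ x, 4 ^ p * ∑' j : ℤ, (Iio (u x / 2)).indicator (· ^ p) ((2 : ℝ≥0∞) ^ j) ∂μ := by
        refine lintegral_mono fun x => ?_
        calc u x ^ p = 2 ^ p * (u x / 2) ^ p := by
              rw [← mul_rpow_of_nonneg _ _ hp0.le, ENNReal.mul_div_cancel two_ne_zero ofNat_ne_top]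
          _ ≤ 2 ^ p * (2 ^ p * _) := by gcongr; exact rpow_le_tsum_dyadic hp0 _
          _ = 4 ^ p * _ := by rw [← mul_assoc, ← mul_rpow_of_nonneg _ _ hp0.le]; norm_num
    _ = 4 ^ p * ∑' j : ℤ, ∫⁻ x, (Iio (u x / 2)).indicator (· ^ p) ((2 : ℝ≥0∞) ^ j) ∂μ := by
        rw [lintegral_const_mul' _ _ (by simp [rpow_eq_top_iff]),
          lintegral_tsum fun j => (measurable_level (hu.div_const 2) p _).aemeasurable]
    _ ≤ 4 ^ p * ∑' j : ℤ,
          K * ∫⁻ x, (Iio (h x)).indicator (· ^ (p - 1)) ((2 : ℝ≥0∞) ^ j) * h x ∂μ := by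
        gcongr with j
        exact lintegral_indicator_Iio_rpow_le hu hh hp.le (weak _)
    _ = 4 ^ p * K *
          ∫⁻ x, (∑' j : ℤ, (Iio (h x)).indicator (· ^ (p - 1)) ((2 : ℝ≥0∞) ^ j)) * h x ∂μ := by
        simp_rw [← ENNReal.tsum_mul_right]
        rw [ENNReal.tsum_mul_left, mul_assoc,
          lintegral_tsum fun j => by exact ((measurable_level hh _ _).mul hh).aemeasurable]
    _ ≤ 4 ^ p * K * ∫⁻ x, (1 - 2 ^ (-(p - 1)))⁻¹ * h x ^ p ∂μ := by
        refine mul_le_mul_right (lintegral_mono fun x => ?_) _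
        rw [← rpow_sub_one_mul_self hp.le (h x), ← mul_assoc]
        exact mul_le_mul_left (tsum_dyadic_rpow_le (sub_pos.2 hp) _) _
    _ = strongConst K p * ∫⁻ x, h x ^ p ∂μ := by
        rw [lintegral_const_mul _ (hh.pow_const p), ← mul_assoc, strongConst]

end Marcinkiewicz

section MaximalFunction

variable {α ι : Type*} [MeasurableSpace α] {μ : Measure α} {B : ι → Set α}

/-- The maximal function of the family of sets `B`: the supremum of the `μ`-averages of `h` over the
sets `B i` containing the point. -/
def maximalFn (μ : Measure α) (B : ι → Set α) (h : α → ℝ≥0∞) (x : α) : ℝ≥0∞ :=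
  ⨆ i, ⨆ _ : x ∈ B i, ⨍⁻ y in B i, h y ∂μ

theorem setLAverage_le_maximalFn {x : α} {i : ι} (hx : x ∈ B i) (h : α → ℝ≥0∞) :
    ⨍⁻ y in B i, h y ∂μ ≤ maximalFn μ B h x :=
  le_iSup₂ (f := fun j (_ : x ∈ B j) => ⨍⁻ y in B j, h y ∂μ) i hx

theorem measurable_maximalFn [Countable ι] (hB : ∀ i, MeasurableSet (B i)) (h : α → ℝ≥0∞) :
    Measurable (maximalFn μ B h) := by
  classical
  refine Measurable.iSup fun i => ?_
  simp_rw [iSup_eq_if]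
  exact Measurable.ite (hB i) measurable_const measurable_const

theorem maximalFn_le_maximalFn_indicator_add (h : α → ℝ≥0∞) (t : ℝ≥0∞) (x : α) :
    maximalFn μ B h x ≤ maximalFn μ B ({y | t < h y}.indicator h) x + t := by
  refine iSup₂_le fun i hx => ?_
  have hle (y : α) : h y ≤ {y | t < h y}.indicator h y + t := by
    by_cases hy : t < h y
    · simp [hy]
    · exact (not_lt.1 hy).trans le_add_self
  calc ⨍⁻ y in B i, h y ∂μ ≤ ⨍⁻ y in B i, ({y | t < h y}.indicator h y + t) ∂μ :=
        lintegral_mono hle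
    _ = (⨍⁻ y in B i, {y | t < h y}.indicator h y ∂μ) + ⨍⁻ _ in B i, t ∂μ :=
        lintegral_add_right _ measurable_const
    _ ≤ maximalFn μ B ({y | t < h y}.indicator h) x + t := by
        gcongr
        · exact setLAverage_le_maximalFn hx _
        · rw [setLAverage_eq, setLIntegral_const]
          exact ENNReal.div_le_of_le_mul le_rfl

theorem setOf_lt_maximalFn (h : α → ℝ≥0∞) (t : ℝ≥0∞) :
    {x | t < maximalFn μ B h x} = ⋃ i : {i // t < ⨍⁻ y in B i, h y ∂μ}, B i := by
  ext x
  simp [maximalFn, lt_iSup_iff, and_comm]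

theorem mul_measure_le_setLIntegral_of_lt_setLAverage {h : α → ℝ≥0∞} {s : Set α} {t : ℝ≥0∞}
    (ht : t < ⨍⁻ y in s, h y ∂μ) : t * μ s ≤ ∫⁻ y in s, h y ∂μ := by
  calc t * μ s ≤ (⨍⁻ y in s, h y ∂μ) * μ s := by gcongr
    _ ≤ ∫⁻ y in s, h y ∂μ := by
        rw [setLAverage_eq, mul_comm]
        exact ENNReal.mul_div_le

/-- A Vitali covering property with constant `K`: every finite subfamily of `B` contains disjoint
sets carrying at least the fraction `1 / K` of the measure of its union. -/
def HasVitaliConst (μ : Measure α) (B : ι → Set α) (K : ℝ≥0∞) : Prop :=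
  ∀ F : Finset ι, ∃ G ⊆ F, (G : Set ι).PairwiseDisjoint B ∧
    μ (⋃ i ∈ F, B i) ≤ K * ∑ i ∈ G, μ (B i)

namespace HasVitaliConst

variable {K : ℝ≥0∞}

theorem mul_measure_biUnion_le (hV : HasVitaliConst μ B K) (hB : ∀ i, MeasurableSet (B i))
    {h : α → ℝ≥0∞} {t : ℝ≥0∞} {F : Finset ι} (hF : ∀ i ∈ F, t < ⨍⁻ y in B i, h y ∂μ) :
    t * μ (⋃ i ∈ F, B i) ≤ K * ∫⁻ y, h y ∂μ := by
  obtain ⟨G, hGF, hG, hμ⟩ := hV F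
  calc t * μ (⋃ i ∈ F, B i) ≤ t * (K * ∑ i ∈ G, μ (B i)) := by gcongr
    _ = K * ∑ i ∈ G, t * μ (B i) := by rw [mul_left_comm, Finset.mul_sum]
    _ ≤ K * ∑ i ∈ G, ∫⁻ y in B i, h y ∂μ := by
        gcongr with i hi
        exact mul_measure_le_setLIntegral_of_lt_setLAverage (hF i (hGF hi))
    _ = K * ∫⁻ y in ⋃ i ∈ G, B i, h y ∂μ := by
        rw [lintegral_biUnion_finset hG fun i _ => hB i]
    _ ≤ K * ∫⁻ y, h y ∂μ := by
        gcongr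
        exact Measure.restrict_le_self

variable [Countable ι]

theorem mul_measure_lt_maximalFn_le (hV : HasVitaliConst μ B K) (hB : ∀ i, MeasurableSet (B i))
    (h : α → ℝ≥0∞) (t : ℝ≥0∞) :
    t * μ {x | t < maximalFn μ B h x} ≤ K * ∫⁻ y, h y ∂μ := by
  have hdir : Directed (· ⊆ ·) fun F : Finset {i // t < ⨍⁻ y in B i, h y ∂μ} => ⋃ i ∈ F, B i :=
    Monotone.directed_le fun F G hFG => biUnion_subset_biUnion_left hFG
  rw [setOf_lt_maximalFn, iUnion_eq_iUnion_finset, hdir.measure_iUnion, ENNReal.mul_iSup]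
  refine iSup_le fun F => ?_
  have := hV.mul_measure_biUnion_le hB (F := F.map (Function.Embedding.subtype _)) (h := h)
    (t := t) (by simp +contextual)
  simpa [iUnion_subtype] using this

theorem lintegral_maximalFn_rpow_le (hV : HasVitaliConst μ B K) (hB : ∀ i, MeasurableSet (B i))
    {h : α → ℝ≥0∞} (hh : Measurable h) {p : ℝ} (hp : 1 < p) :
    ∫⁻ x, maximalFn μ B h x ^ p ∂μ ≤ strongConst K p * ∫⁻ x, h x ^ p ∂μ := by
  refine lintegral_rpow_le_of_weak_type (measurable_maximalFn hB h) hh hp fun t => ?_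
  have hsub : {x | 2 * t < maximalFn μ B h x} ⊆
      {x | t < maximalFn μ B ({y | t < h y}.indicator h) x} := fun x hx => by
    refine lt_of_add_lt_add_right (a := t) ?_
    rw [← two_mul]
    exact lt_of_lt_of_le hx (maximalFn_le_maximalFn_indicator_add h t x)
  calc t * μ {x | 2 * t < maximalFn μ B h x}
      ≤ t * μ {x | t < maximalFn μ B ({y | t < h y}.indicator h) x} := by gcongr
    _ ≤ K * ∫⁻ x, {y | t < h y}.indicator h x ∂μ := hV.mul_measure_lt_maximalFn_le hB _ t
    _ = K * ∫⁻ x in {x | t < h x}, h x ∂μ := by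
        rw [lintegral_indicator (measurableSet_lt measurable_const hh)]

end HasVitaliConst

theorem hasVitaliConst_closedBall {α : Type*} [PseudoMetricSpace α] [MeasurableSpace α]
    {μ : Measure α} {c : ι → α} {r : ι → ℝ} {K : ℝ≥0∞}
    (hK : ∀ i, μ (Metric.closedBall (c i) (5 * r i)) ≤ K * μ (Metric.closedBall (c i) (r i))) :
    HasVitaliConst μ (fun i => Metric.closedBall (c i) (r i)) K := by
  intro F
  obtain ⟨R, hR⟩ := (F.finite_toSet.image r).bddAbove
  obtain ⟨u, huF, hdisj, hcover⟩ := Vitali.exists_disjoint_subfamily_covering_enlargement_closedBall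
    (F : Set ι) c r R (fun i hi => hR ⟨i, hi, rfl⟩) 5 (by norm_num)
  obtain ⟨G, rfl⟩ := (F.finite_toSet.subset huF).exists_finset_coe
  refine ⟨G, huF, hdisj, ?_⟩
  calc μ (⋃ i ∈ F, Metric.closedBall (c i) (r i))
      ≤ μ (⋃ i ∈ G, Metric.closedBall (c i) (5 * r i)) := by
        refine measure_mono (iUnion₂_subset fun i hi => ?_)
        obtain ⟨j, hj, hij⟩ := hcover i hi
        exact hij.trans (subset_biUnion_of_mem (u := fun j => Metric.closedBall (c j) (5 * r j)) hj)
    _ ≤ ∑ i ∈ G, μ (Metric.closedBall (c i) (5 * r i)) := measure_biUnion_finset_le _ _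
    _ ≤ K * ∑ i ∈ G, μ (Metric.closedBall (c i) (r i)) := by
        rw [Finset.mul_sum]
        exact Finset.sum_le_sum fun i _ => hK i

/-- A family of sets is laminar if any two of its members are nested or disjoint. -/
def IsLaminar (B : ι → Set α) : Prop :=
  ∀ i j, B i ⊆ B j ∨ B j ⊆ B i ∨ Disjoint (B i) (B j)

theorem IsLaminar.hasVitaliConst (hL : IsLaminar B) (μ : Measure α) : HasVitaliConst μ B 1 := by
  classical
  intro F
  induction F using Finset.strongInduction with | H F ih
  by_cases hnested : ∃ i ∈ F, ∃ j ∈ F, i ≠ j ∧ B i ⊆ B j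
  · obtain ⟨i, hi, j, hj, hij, hsub⟩ := hnested
    obtain ⟨G, hGF, hG, hμ⟩ := ih (F.erase i) (Finset.erase_ssubset hi)
    refine ⟨G, hGF.trans (F.erase_subset i), hG, le_trans (measure_mono ?_) hμ⟩
    have hj' : B j ⊆ ⋃ k ∈ F.erase i, B k :=
      subset_biUnion_of_mem (u := B) (Finset.mem_erase.2 ⟨hij.symm, hj⟩)
    conv_lhs => rw [← Finset.insert_erase hi, Finset.set_biUnion_insert]
    exact union_subset (hsub.trans hj') subset_rfl
  · push Not at hnested
    refine ⟨F, subset_rfl, fun i hi j hj hij => ?_, by simpa using measure_biUnion_finset_le F B⟩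
    exact ((hL i j).resolve_left (hnested i hi j hj hij)).resolve_left (hnested j hj i hi hij.symm)

end MaximalFunction

section WeightedMaximalFunction

variable {α : Type*} [MeasurableSpace α] {μ : Measure α} {w f : α → ℝ≥0∞}

theorem setLIntegral_eq_zero_of_zero_subset {s : Set α} (hw : Measurable w) (hf : Measurable f)
    (hfw : ∀ x, w x = 0 → f x = 0) (hs : ∫⁻ x in s, w x ∂μ = 0) : ∫⁻ x in s, f x ∂μ = 0 := by
  rw [lintegral_eq_zero_iff hw] at hs
  rw [lintegral_eq_zero_iff hf]
  exact hs.mono hfw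

theorem setLIntegral_eq_zero_of_ae_mul_div_ne_top {s : Set α} {N : α → ℝ≥0∞} (hs : MeasurableSet s)
    (hw : Measurable w) (hf : Measurable f) (hfw : ∀ x, w x = 0 → f x = 0) (hw_top : ∀ x, w x ≠ ∞)
    (hN : ∀ x ∈ s, N x = ∞) (hfin : ∀ᵐ x ∂μ.withDensity w, f x * (N x / w x) ≠ ∞) :
    ∫⁻ x in s, f x ∂μ = 0 := by
  rw [ae_withDensity_iff hw] at hfin
  rw [lintegral_eq_zero_iff hf]
  filter_upwards [ae_restrict_of_ae hfin, ae_restrict_mem hs] with x hx hxs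
  by_contra hfx
  exact hx (mt (hfw x) hfx) (by rw [hN x hxs, top_div_of_ne_top (hw_top x), mul_top hfx])

-- Multiplying `f` by `N / w` compensates the change of measure, because `N` dominates the mean of
-- `w` over `s`.
theorem setLAverage_le_setLAverage_withDensity {s : Set α} {N : α → ℝ≥0∞} (hs : MeasurableSet s)
    (hw : Measurable w) (hf : Measurable f) (hfw : ∀ x, w x = 0 → f x = 0) (hw_top : ∀ x, w x ≠ ∞)
    (hN : Measurable N) (hNs : ∀ x ∈ s, ⨍⁻ y in s, w y ∂μ ≤ N x)
    (hfin : ∀ᵐ x ∂μ.withDensity w, f x * (N x / w x) ≠ ∞) :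
    ⨍⁻ x in s, f x ∂μ ≤ ⨍⁻ x in s, f x * (N x / w x) ∂μ.withDensity w := by
  have hh : Measurable fun x => f x * (N x / w x) := hf.mul (hN.div hw)
  have hcancel (x : α) : w x * (f x * (N x / w x)) = N x * f x := by
    rcases eq_or_ne (f x) 0 with hx | hx
    · simp [hx]
    · rw [mul_left_comm, ENNReal.mul_div_cancel (mt (hfw x) hx) (hw_top x), mul_comm]
  rcases eq_or_ne (μ s) ∞ with hμ | hμ
  · simp [setLAverage_eq, hμ]
  rw [setLAverage_eq, setLAverage_eq, withDensity_apply _ hs,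
    setLIntegral_withDensity_eq_setLIntegral_mul _ hw hh hs]
  simp only [Pi.mul_apply, hcancel]
  rcases eq_or_ne (∫⁻ x in s, w x ∂μ) 0 with h0 | h0
  · simp [setLIntegral_eq_zero_of_zero_subset hw hf hfw h0]
  rcases eq_or_ne (∫⁻ x in s, w x ∂μ) ∞ with htop | htop
  · have hN_top : ∀ x ∈ s, N x = ∞ := fun x hx => top_le_iff.1 <| (hNs x hx).trans' <| by
      rw [setLAverage_eq, htop, top_div_of_ne_top hμ]
    simp [setLIntegral_eq_zero_of_ae_mul_div_ne_top hs hw hf hfw hw_top hN_top hfin]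
  rw [ENNReal.le_div_iff_mul_le (.inl h0) (.inl htop)]
  calc (∫⁻ x in s, f x ∂μ) / μ s * ∫⁻ x in s, w x ∂μ
      = ∫⁻ x in s, (⨍⁻ y in s, w y ∂μ) * f x ∂μ := by
        rw [lintegral_const_mul _ hf, setLAverage_eq]
        simp only [div_eq_mul_inv]
        ring
    _ ≤ ∫⁻ x in s, N x * f x ∂μ :=
        setLIntegral_mono' hs fun x hx => mul_le_mul_left (hNs x hx) _

variable {ι : Type*} [Countable ι] {B : ι → Set α}

theorem lintegral_maximalFn_rpow_mul_le (hB : ∀ i, MeasurableSet (B i)) (hw : Measurable w)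
    (hw_top : ∀ x, w x ≠ ∞) {K : ℝ≥0∞} (hK : K ≠ 0) (hV : HasVitaliConst (μ.withDensity w) B K)
    (hf : Measurable f) (hfw : ∀ x, w x = 0 → f x = 0) {p : ℝ} (hp : 1 < p) :
    ∫⁻ x, maximalFn μ B f x ^ p * w x ∂μ
      ≤ strongConst K p * ∫⁻ x, f x ^ p * ((maximalFn μ B w x / w x) ^ p * w x) ∂μ := by
  have hp0 : 0 < p := by linarith
  have hN := measurable_maximalFn (μ := μ) hB w
  set h : α → ℝ≥0∞ := fun x => f x * (maximalFn μ B w x / w x)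
  have hh : Measurable h := hf.mul (hN.div hw)
  have hint : ∫⁻ x, f x ^ p * ((maximalFn μ B w x / w x) ^ p * w x) ∂μ
      = ∫⁻ x, h x ^ p ∂μ.withDensity w := by
    rw [lintegral_withDensity_eq_lintegral_mul _ hw (hh.pow_const p)]
    refine lintegral_congr fun x => ?_
    rw [Pi.mul_apply, mul_rpow_of_nonneg _ _ hp0.le, ← mul_assoc, mul_comm]
  rw [hint]
  rcases eq_or_ne (∫⁻ x, h x ^ p ∂μ.withDensity w) ∞ with htop | htop
  · rw [htop, mul_top (strongConst_ne_zero hK p)]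
    exact le_top
  have hfin : ∀ᵐ x ∂μ.withDensity w, h x ≠ ∞ := by
    filter_upwards [ae_lt_top (hh.pow_const p) htop] with x hx hx_top
    simp [hx_top, top_rpow_of_pos hp0] at hx
  have hle (x : α) : maximalFn μ B f x ≤ maximalFn (μ.withDensity w) B h x :=
    iSup₂_mono fun i _ => setLAverage_le_setLAverage_withDensity (hB i) hw hf hfw hw_top hN
      (fun _ hy => setLAverage_le_maximalFn hy w) hfin
  calc ∫⁻ x, maximalFn μ B f x ^ p * w x ∂μ
      = ∫⁻ x, maximalFn μ B f x ^ p ∂μ.withDensity w := by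
        rw [lintegral_withDensity_eq_lintegral_mul _ hw ((measurable_maximalFn hB f).pow_const p)]
        simp only [Pi.mul_apply, mul_comm]
    _ ≤ ∫⁻ x, maximalFn (μ.withDensity w) B h x ^ p ∂μ.withDensity w := by
        gcongr with x
        exact hle x
    _ ≤ strongConst K p * ∫⁻ x, h x ^ p ∂μ.withDensity w :=
        hV.lintegral_maximalFn_rpow_le hB hh hp

end WeightedMaximalFunction

theorem setLAverage_le_mul_setLAverage {α : Type*} [MeasurableSpace α] {μ : Measure α}
    {f : α → ℝ≥0∞} {s t : Set α} {K : ℝ≥0} (hs : MeasurableSet s)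
    (hst : s ∩ Function.support f ⊆ t) (hμ : μ t ≤ K * μ s) :
    ⨍⁻ x in s, f x ∂μ ≤ K * ⨍⁻ x in t, f x ∂μ := by
  have hint : ∫⁻ x in s, f x ∂μ ≤ ∫⁻ x in t, f x ∂μ := by
    calc ∫⁻ x in s, f x ∂μ = ∫⁻ x, s.indicator f x ∂μ := (lintegral_indicator hs f).symm
      _ ≤ ∫⁻ x, t.indicator f x ∂μ := by
          refine lintegral_mono (indicator_le fun x hx => ?_)
          by_cases hfx : f x = 0
          · simp [hfx]
          · rw [indicator_of_mem (hst ⟨hx, hfx⟩)]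
      _ ≤ ∫⁻ x in t, f x ∂μ := lintegral_indicator_le f t
  rcases eq_or_ne (μ t) 0 with h0 | h0
  · rw [setLIntegral_measure_zero t f h0, nonpos_iff_eq_zero] at hint
    simp [setLAverage_eq, hint]
  have hK : (K : ℝ≥0∞) ≠ 0 := fun hK => h0 (by simpa [hK] using hμ)
  calc ⨍⁻ x in s, f x ∂μ ≤ (∫⁻ x in t, f x ∂μ) / μ s := by
        rw [setLAverage_eq]
        gcongr
    _ = K * ((∫⁻ x in t, f x ∂μ) / (K * μ s)) := by
        rw [← mul_div_assoc, ENNReal.mul_div_mul_left _ _ hK coe_ne_top]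
    _ ≤ K * ⨍⁻ x in t, f x ∂μ := by
        rw [setLAverage_eq]
        gcongr

section Cubes

variable {n : ℕ}

theorem mem_Cube {a x : Fin n → ℝ} {l : ℝ} : x ∈ Cube n a l ↔ ∀ i, a i ≤ x i ∧ x i < a i + l := by
  simp [Cube, mem_pi]

theorem volume_Cube (a : Fin n → ℝ) (l : ℝ) : volume (Cube n a l) = ENNReal.ofReal l ^ n := by
  simp [Cube, volume_pi_pi, Real.volume_Ico]

/-- The nondegenerate cubes, as a property of sets. -/
def IsCube (Q : Set (Fin n → ℝ)) : Prop := ∃ a l, 0 < l ∧ Q = Cube n a l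

theorem isCube_Cube (a : Fin n → ℝ) {l : ℝ} (hl : 0 < l) : IsCube (Cube n a l) := ⟨a, l, hl, rfl⟩

namespace IsCube

variable {Q : Set (Fin n → ℝ)}

theorem measurableSet (hQ : IsCube Q) : MeasurableSet Q := by
  obtain ⟨a, l, -, rfl⟩ := hQ
  exact MeasurableSet.univ_pi fun i => measurableSet_Ico

theorem volume_ne_zero (hQ : IsCube Q) : volume Q ≠ 0 := by
  obtain ⟨a, l, hl, rfl⟩ := hQ
  simp [volume_Cube, hl]

theorem volume_ne_top (hQ : IsCube Q) : volume Q ≠ ∞ := by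
  obtain ⟨a, l, -, rfl⟩ := hQ
  simp [volume_Cube]

end IsCube

theorem MaxFn_le_iff {f : (Fin n → ℝ) → ℝ≥0∞} {x : Fin n → ℝ} {c : ℝ≥0∞} :
    MaxFn f x ≤ c ↔ ∀ Q, IsCube Q → x ∈ Q → ⨍⁻ y in Q, f y ∂volume ≤ c := by
  simp only [MaxFn, iSup_le_iff, setLAverage_eq, div_eq_mul_inv, mul_comm, IsCube]
  grind

theorem maximalFn_le_MaxFn {ι : Type*} {B : ι → Set (Fin n → ℝ)} (hB : ∀ i, IsCube (B i))
    (f : (Fin n → ℝ) → ℝ≥0∞) (x : Fin n → ℝ) : maximalFn volume B f x ≤ MaxFn f x :=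
  iSup₂_le fun i hx => MaxFn_le_iff.1 le_rfl _ (hB i) hx

/-- The closed sup-norm balls with rational centre and radius, a countable family which can replace
the cubes up to a dimensional constant. -/
def ratBall (q : (Fin n → ℚ) × ℚ) : Set (Fin n → ℝ) := Metric.closedBall (fun i => q.1 i) q.2

theorem hasVitaliConst_ratBall : HasVitaliConst volume (ratBall (n := n)) (5 ^ n) := by
  refine hasVitaliConst_closedBall fun q => ?_
  rcases lt_or_ge (q.2 : ℝ) 0 with hq | hq
  · rw [Metric.closedBall_eq_empty.2 (by linarith), measure_empty]
    exact zero_le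
  · rw [Real.volume_pi_closedBall _ hq, Real.volume_pi_closedBall _ (by positivity),
      mul_left_comm, mul_pow, ENNReal.ofReal_mul (by positivity)]
    simp

theorem IsCube.exists_subset_ratBall {Q : Set (Fin n → ℝ)} (hQ : IsCube Q) :
    ∃ q, Q ⊆ ratBall q ∧ volume (ratBall q) ≤ 4 ^ n * volume Q := by
  obtain ⟨a, l, hl, rfl⟩ := hQ
  choose c hc using fun i => exists_rat_btwn (lt_add_of_pos_right (a i) hl)
  obtain ⟨r, hlr, hr⟩ := exists_rat_btwn (show l < 2 * l by linarith)
  have hr0 : (0 : ℝ) < r := hl.trans hlr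
  refine ⟨(c, r), fun x hx => ?_, ?_⟩
  · refine mem_closedBall_iff_norm.2 ((pi_norm_le_iff_of_nonneg hr0.le).2 fun i => ?_)
    have := mem_Cube.1 hx i
    rw [Pi.sub_apply, Real.norm_eq_abs, abs_le]
    constructor <;> linarith [(hc i).1, (hc i).2]
  · rw [ratBall, Real.volume_pi_closedBall _ hr0.le, volume_Cube, Fintype.card_fin,
      ENNReal.ofReal_pow (by positivity), ← mul_pow]
    gcongr
    calc ENNReal.ofReal (2 * r) ≤ ENNReal.ofReal (4 * l) := ENNReal.ofReal_le_ofReal (by linarith)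
      _ = 4 * ENNReal.ofReal l := by rw [ENNReal.ofReal_mul (by norm_num)]; simp

theorem MaxFn_le_mul_maximalFn_ratBall (f : (Fin n → ℝ) → ℝ≥0∞) (x : Fin n → ℝ) :
    MaxFn f x ≤ 4 ^ n * maximalFn volume ratBall f x := by
  refine MaxFn_le_iff.2 fun Q hQ hx => ?_
  obtain ⟨q, hQq, hvol⟩ := hQ.exists_subset_ratBall
  calc ⨍⁻ y in Q, f y ∂volume ≤ (4 ^ n : ℝ≥0) * ⨍⁻ y in ratBall q, f y ∂volume :=
        setLAverage_le_mul_setLAverage hQ.measurableSet (inter_subset_left.trans hQq)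
          (by simpa using hvol)
    _ ≤ 4 ^ n * maximalFn volume ratBall f x := by
        push_cast
        gcongr
        exact setLAverage_le_maximalFn (hQq hx) f

/-- The constant obtained here for the strong `(p, p)` bound of the Hardy–Littlewood maximal
function on `ℝ^n`. -/
def hardyLittlewoodConst (n : ℕ) (p : ℝ) : ℝ≥0∞ := (4 ^ n) ^ p * strongConst (5 ^ n) p

theorem hardyLittlewoodConst_ne_top (n : ℕ) {p : ℝ} (hp : 1 < p) : hardyLittlewoodConst n p ≠ ∞ :=
  mul_ne_top (rpow_ne_top_of_nonneg (by linarith) (by simp))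
    (strongConst_ne_top (by simp) hp)

theorem lintegral_MaxFn_rpow_le {f : (Fin n → ℝ) → ℝ≥0∞} (hf : Measurable f) {p : ℝ} (hp : 1 < p) :
    ∫⁻ x, MaxFn f x ^ p ≤ hardyLittlewoodConst n p * ∫⁻ x, f x ^ p := by
  have hp0 : 0 ≤ p := by linarith
  calc ∫⁻ x, MaxFn f x ^ p ≤ ∫⁻ x, (4 ^ n) ^ p * maximalFn volume ratBall f x ^ p := by
        gcongr with x
        rw [← mul_rpow_of_nonneg _ _ hp0]
        exact rpow_le_rpow (MaxFn_le_mul_maximalFn_ratBall f x) hp0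
    _ = (4 ^ n) ^ p * ∫⁻ x, maximalFn volume ratBall f x ^ p :=
        lintegral_const_mul' _ _ (rpow_ne_top_of_nonneg hp0 (by simp))
    _ ≤ hardyLittlewoodConst n p * ∫⁻ x, f x ^ p := by
        rw [hardyLittlewoodConst, mul_assoc]
        gcongr
        exact hasVitaliConst_ratBall.lintegral_maximalFn_rpow_le
          (fun q => Metric.isClosed_closedBall.measurableSet) hf hp

end Cubes

theorem indicator_rpow {α : Type*} (s : Set α) (f : α → ℝ≥0∞) {p : ℝ} (hp : 0 < p) (x : α) :
    s.indicator (fun y => f y ^ p) x = s.indicator f x ^ p :=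
  congr_fun (indicator_comp_of_zero (g := (· ^ p)) (zero_rpow_of_pos hp)) x

theorem le_div_rpow_mul_self {s t : ℝ≥0∞} {p : ℝ} (hts : t ≤ s) (ht : t ≠ ∞) (hp : 0 ≤ p) :
    t ≤ (s / t) ^ p * t := by
  rcases eq_or_ne t 0 with rfl | h0
  · simp
  · refine le_mul_of_one_le_left' ?_
    rcases hp.eq_or_lt with rfl | hp
    · simp
    · exact one_le_rpow ((ENNReal.le_div_iff_mul_le (.inl h0) (.inl ht)).2 (by rwa [one_mul])) hp

section StepFunctions

variable {α κ : Type*} {E : κ → Set α} {a : κ → ℝ≥0∞}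

/-- The step function taking the value `a e` on `E e`, for pairwise disjoint sets `E e`. -/
def stepFn (E : κ → Set α) (a : κ → ℝ≥0∞) (x : α) : ℝ≥0∞ :=
  ∑' e, (E e).indicator (fun _ => a e) x

theorem stepFn_eq_zero {x : α} (hx : x ∉ ⋃ e, E e) : stepFn E a x = 0 := by
  simp only [mem_iUnion, not_exists] at hx
  simp [stepFn, hx]

theorem stepFn_eq_of_mem (hE : Pairwise (onFun Disjoint E)) {x : α} {e : κ} (hx : x ∈ E e) :
    stepFn E a x = a e := by
  rw [stepFn, tsum_eq_single e fun e' he' =>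
    indicator_of_notMem (disjoint_right.1 (hE he') hx) _, indicator_of_mem hx]

theorem stepFn_ne_top (hE : Pairwise (onFun Disjoint E)) (ha : ∀ e, a e ≠ ∞) (x : α) :
    stepFn E a x ≠ ∞ := by
  by_cases hx : x ∈ ⋃ e, E e
  · obtain ⟨e, he⟩ := mem_iUnion.1 hx
    rw [stepFn_eq_of_mem hE he]
    exact ha e
  · simp [stepFn_eq_zero hx]

variable [MeasurableSpace α] {μ : Measure α} [Countable κ]

theorem measurable_stepFn (hE : ∀ e, MeasurableSet (E e)) (a : κ → ℝ≥0∞) :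
    Measurable (stepFn E a) :=
  .tsum fun e => measurable_const.indicator (hE e)

theorem lintegral_mul_stepFn (hE : Pairwise (onFun Disjoint E))
    (hE_meas : ∀ e, MeasurableSet (E e)) (ha : ∀ e, a e ≠ ∞) (g : α → ℝ≥0∞) :
    ∫⁻ x, g x * stepFn E a x ∂μ = ∑' e, a e * ∫⁻ x in E e, g x ∂μ := by
  have hsupp : (⋃ e, E e).indicator (fun x => g x * stepFn E a x) = fun x => g x * stepFn E a x :=
    indicator_eq_self.2 fun x hx => by
      by_contra hxE
      exact hx (by simp [stepFn_eq_zero hxE])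
  calc ∫⁻ x, g x * stepFn E a x ∂μ
      = ∑' e, ∫⁻ x in E e, g x * stepFn E a x ∂μ := by
        rw [← lintegral_iUnion hE_meas hE, ← lintegral_indicator (.iUnion hE_meas), hsupp]
    _ = ∑' e, a e * ∫⁻ x in E e, g x ∂μ := by
        congr! 2 with e
        rw [← lintegral_const_mul' _ _ (ha e)]
        refine setLIntegral_congr_fun (hE_meas e) fun x hx => ?_
        simp only [stepFn_eq_of_mem hE hx, mul_comm]

end StepFunctions

section CrossingCubes

variable {n : ℕ} {κ ι : Type*} {E : κ → Set (Fin n → ℝ)} {D : ι → Set (Fin n → ℝ)} {K : ℝ≥0}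

/-- The family `D` covers the crossings of the family `E` with constant `K`: whatever a cube meeting
two different sets of `E` contains of `⋃ e, E e` lies in a set of `D` of comparable volume. -/
def CoversCrossings (D : ι → Set (Fin n → ℝ)) (E : κ → Set (Fin n → ℝ)) (K : ℝ≥0) : Prop :=
  ∀ Q, IsCube Q → ∀ e e', e ≠ e' → (Q ∩ E e).Nonempty → (Q ∩ E e').Nonempty →
    ∃ i, Q ∩ ⋃ e, E e ⊆ D i ∧ volume (D i) ≤ K * volume Q

theorem CoversCrossings.MaxFn_le_max (hDE : CoversCrossings D E K) {f : (Fin n → ℝ) → ℝ≥0∞}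
    (hf : Function.support f ⊆ ⋃ e, E e) {e : κ} {x : Fin n → ℝ} (hx : x ∈ E e) :
    MaxFn f x ≤ max (MaxFn ((E e).indicator f) x) (K * maximalFn volume D f x) := by
  refine MaxFn_le_iff.2 fun Q hQ hxQ => ?_
  by_cases hcross : ∃ e', e ≠ e' ∧ (Q ∩ E e').Nonempty
  · obtain ⟨e', hee', hQe'⟩ := hcross
    obtain ⟨i, hQD, hvol⟩ := hDE Q hQ e e' hee' ⟨x, hxQ, hx⟩ hQe'
    refine le_max_of_le_right ?_
    calc ⨍⁻ y in Q, f y ∂volume ≤ K * ⨍⁻ y in D i, f y ∂volume :=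
          setLAverage_le_mul_setLAverage hQ.measurableSet
            ((inter_subset_inter_right Q hf).trans hQD) hvol
      _ ≤ K * maximalFn volume D f x := by
          gcongr
          exact setLAverage_le_maximalFn (hQD ⟨hxQ, mem_iUnion_of_mem e hx⟩) f
  · push Not at hcross
    refine le_max_of_le_left ?_
    have hfQ : EqOn f ((E e).indicator f) Q := fun y hy => by
      by_contra hfy
      have hye : y ∉ E e := fun hye => hfy (indicator_of_mem hye f).symm
      obtain ⟨e', hye'⟩ := mem_iUnion.1 (hf (show f y ≠ 0 by simpa [hye] using hfy))
      have hne : e ≠ e' := fun h => hye (h ▸ hye')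
      exact (hcross e' hne).subset ⟨hy, hye'⟩
    rw [setLAverage_congr_fun hQ.measurableSet hfQ]
    exact MaxFn_le_iff.1 le_rfl Q hQ hxQ

variable {a : κ → ℝ≥0∞}

theorem stepFn_le_MaxFn (hE : Pairwise (onFun Disjoint E)) (hE_cube : ∀ e, IsCube (E e))
    (x : Fin n → ℝ) : stepFn E a x ≤ MaxFn (stepFn E a) x := by
  by_cases hx : x ∈ ⋃ e, E e
  · obtain ⟨e, he⟩ := mem_iUnion.1 hx
    calc stepFn E a x = ⨍⁻ _ in E e, a e ∂volume := by
          rw [stepFn_eq_of_mem hE he,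
            setLAverage_const (hE_cube e).volume_ne_zero (hE_cube e).volume_ne_top]
      _ = ⨍⁻ y in E e, stepFn E a y ∂volume :=
          setLAverage_congr_fun (hE_cube e).measurableSet fun y hy => (stepFn_eq_of_mem hE hy).symm
      _ ≤ MaxFn (stepFn E a) x := MaxFn_le_iff.1 le_rfl _ (hE_cube e) he
  · simp [stepFn_eq_zero hx]

variable [Countable κ] {f : (Fin n → ℝ) → ℝ≥0∞} {p : ℝ}

theorem tsum_mul_setLIntegral_MaxFn_indicator_rpow_le (hE : Pairwise (onFun Disjoint E))
    (hE_meas : ∀ e, MeasurableSet (E e)) (ha : ∀ e, a e ≠ ∞) (hf : Measurable f) (hp : 1 < p) :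
    ∑' e, a e * ∫⁻ x in E e, MaxFn ((E e).indicator f) x ^ p
      ≤ hardyLittlewoodConst n p * ∫⁻ x, f x ^ p * stepFn E a x := by
  rw [lintegral_mul_stepFn hE hE_meas ha, ← ENNReal.tsum_mul_left]
  refine ENNReal.tsum_le_tsum fun e => ?_
  rw [mul_left_comm]
  gcongr
  calc ∫⁻ x in E e, MaxFn ((E e).indicator f) x ^ p ≤ ∫⁻ x, MaxFn ((E e).indicator f) x ^ p :=
        setLIntegral_le_lintegral _ _
    _ ≤ hardyLittlewoodConst n p * ∫⁻ x, (E e).indicator f x ^ p :=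
        lintegral_MaxFn_rpow_le (hf.indicator (hE_meas e)) hp
    _ = hardyLittlewoodConst n p * ∫⁻ x in E e, f x ^ p := by
        rw [← lintegral_indicator (hE_meas e)]
        simp only [← indicator_rpow (E e) f (by linarith : 0 < p)]

theorem CoversCrossings.lintegral_MaxFn_rpow_mul_stepFn_le_add [Countable ι]
    (hDE : CoversCrossings D E K) (hE : Pairwise (onFun Disjoint E))
    (hE_meas : ∀ e, MeasurableSet (E e)) (hD_meas : ∀ i, MeasurableSet (D i))
    (ha : ∀ e, a e ≠ ∞) (hf : Measurable f) (hfE : Function.support f ⊆ ⋃ e, E e) (hp : 1 < p) :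
    ∫⁻ x, MaxFn f x ^ p * stepFn E a x
      ≤ (hardyLittlewoodConst n p * ∫⁻ x, f x ^ p * stepFn E a x)
        + K ^ p * ∫⁻ x, maximalFn volume D f x ^ p * stepFn E a x := by
  have hp0 : 0 ≤ p := by linarith
  have hpt (e : κ) (x : Fin n → ℝ) (hx : x ∈ E e) : MaxFn f x ^ p
      ≤ MaxFn ((E e).indicator f) x ^ p + K ^ p * maximalFn volume D f x ^ p := by
    rw [← mul_rpow_of_nonneg _ _ hp0]
    refine (rpow_le_rpow (hDE.MaxFn_le_max hfE hx) hp0).trans ?_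
    rw [(monotone_rpow_of_nonneg hp0).map_max]
    exact max_le le_self_add le_add_self
  calc ∫⁻ x, MaxFn f x ^ p * stepFn E a x
      = ∑' e, a e * ∫⁻ x in E e, MaxFn f x ^ p := lintegral_mul_stepFn hE hE_meas ha _
    _ ≤ ∑' e, a e * ∫⁻ x in E e,
          (MaxFn ((E e).indicator f) x ^ p + K ^ p * maximalFn volume D f x ^ p) := by
        exact ENNReal.tsum_le_tsum fun e =>
          mul_le_mul_right (setLIntegral_mono' (hE_meas e) (hpt e)) _
    _ = (∑' e, a e * ∫⁻ x in E e, MaxFn ((E e).indicator f) x ^ p)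
          + K ^ p * ∫⁻ x, maximalFn volume D f x ^ p * stepFn E a x := by
        have hM := (measurable_maximalFn (μ := volume) hD_meas f).pow_const p
        rw [lintegral_mul_stepFn hE hE_meas ha, ← ENNReal.tsum_mul_left, ← ENNReal.tsum_add]
        congr! 2 with e
        rw [lintegral_add_right _ (hM.const_mul _), lintegral_const_mul _ hM, mul_add,
          mul_left_comm]
    _ ≤ _ := by
        exact add_le_add_left
          (tsum_mul_setLIntegral_MaxFn_indicator_rpow_le hE hE_meas ha hf hp) _

theorem CoversCrossings.lintegral_MaxFn_rpow_mul_stepFn_le [Countable ι]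
    (hDE : CoversCrossings D E K) (hE : Pairwise (onFun Disjoint E))
    (hE_cube : ∀ e, IsCube (E e)) (hD : IsLaminar D) (hD_cube : ∀ i, IsCube (D i))
    (ha : ∀ e, a e ≠ ∞) (hf : Measurable f) (hfa : ∀ x, stepFn E a x = 0 → f x = 0) (hp : 1 < p) :
    ∫⁻ x, MaxFn f x ^ p * stepFn E a x
      ≤ (hardyLittlewoodConst n p + K ^ p * strongConst 1 p)
        * ∫⁻ x, f x ^ p * ((MaxFn (stepFn E a) x / stepFn E a x) ^ p * stepFn E a x) := by
  have hp0 : 0 ≤ p := by linarith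
  have hE_meas (e : κ) := (hE_cube e).measurableSet
  have hD_meas (i : ι) := (hD_cube i).measurableSet
  have hfE : Function.support f ⊆ ⋃ e, E e := fun x hx => by
    by_contra hxE
    exact hx (hfa x (stepFn_eq_zero hxE))
  set w := stepFn E a
  have hw : Measurable w := measurable_stepFn hE_meas a
  have hw_top : ∀ x, w x ≠ ∞ := stepFn_ne_top hE ha
  have hw_le (x : Fin n → ℝ) : w x ≤ (MaxFn w x / w x) ^ p * w x :=
    le_div_rpow_mul_self (stepFn_le_MaxFn hE hE_cube x) (hw_top x) hp0
  calc ∫⁻ x, MaxFn f x ^ p * w x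
      ≤ (hardyLittlewoodConst n p * ∫⁻ x, f x ^ p * w x)
          + K ^ p * ∫⁻ x, maximalFn volume D f x ^ p * w x :=
        hDE.lintegral_MaxFn_rpow_mul_stepFn_le_add hE hE_meas hD_meas ha hf hfE hp
    _ ≤ (hardyLittlewoodConst n p * ∫⁻ x, f x ^ p * w x)
          + K ^ p * (strongConst 1 p
            * ∫⁻ x, f x ^ p * ((maximalFn volume D w x / w x) ^ p * w x)) := by
        gcongr
        exact lintegral_maximalFn_rpow_mul_le hD_meas hw hw_top one_ne_zero
          (hD.hasVitaliConst _) hf hfa hp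
    _ ≤ (hardyLittlewoodConst n p * ∫⁻ x, f x ^ p * ((MaxFn w x / w x) ^ p * w x))
          + K ^ p * (strongConst 1 p * ∫⁻ x, f x ^ p * ((MaxFn w x / w x) ^ p * w x)) := by
        gcongr with x x
        · exact hw_le x
        · exact maximalFn_le_MaxFn hD_cube w x
    _ = (hardyLittlewoodConst n p + K ^ p * strongConst 1 p)
          * ∫⁻ x, f x ^ p * ((MaxFn w x / w x) ^ p * w x) := by ring

theorem maximal_bounded_Lpv_to_Lpw_general [Countable ι] (hE : Pairwise (onFun Disjoint E))
    (hE_cube : ∀ e, IsCube (E e)) (hD : IsLaminar D) (hD_cube : ∀ i, IsCube (D i))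
    (hDE : CoversCrossings D E K) (hp : 1 < p) :
    ∃ C : ℝ≥0∞, C ≠ ∞ ∧ ∀ a : κ → ℝ≥0∞, (∀ e, a e ≠ ∞) →
      ∀ f : (Fin n → ℝ) → ℝ≥0∞, Measurable f → (∀ x, stepFn E a x = 0 → f x = 0) →
        ∫⁻ x, MaxFn f x ^ p * stepFn E a x
          ≤ C ^ p * ∫⁻ x, f x ^ p *
              (if stepFn E a x = 0 then 0
               else (MaxFn (stepFn E a) x / stepFn E a x) ^ p * stepFn E a x) := by
  have hp0 : 0 < p := by linarith
  have hK : (K : ℝ≥0∞) ^ p ≠ ∞ := rpow_ne_top_of_nonneg hp0.le coe_ne_top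
  have hC : hardyLittlewoodConst n p + K ^ p * strongConst 1 p ≠ ∞ :=
    add_ne_top.2 ⟨hardyLittlewoodConst_ne_top n hp,
      mul_ne_top hK (strongConst_ne_top one_ne_top hp)⟩
  refine ⟨_ ^ p⁻¹, rpow_ne_top_of_nonneg (by positivity) hC, fun a ha f hf hfa => ?_⟩
  have hv (x : Fin n → ℝ) : (if stepFn E a x = 0 then 0
      else (MaxFn (stepFn E a) x / stepFn E a x) ^ p * stepFn E a x)
        = (MaxFn (stepFn E a) x / stepFn E a x) ^ p * stepFn E a x := by
    split_ifs with hx <;> simp [hx]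
  simp only [rpow_inv_rpow hp0.ne', hv]
  exact hDE.lintegral_MaxFn_rpow_mul_stepFn_le hE hE_cube hD hD_cube ha hf hfa hp

end CrossingCubes

section DyadicCubes

variable {n : ℕ}

/-- The dyadic cube of side length `2 ^ q.1` with corner `2 ^ q.1 • q.2`. -/
def dyadicCube (q : ℤ × (Fin n → ℤ)) : Set (Fin n → ℝ) :=
  Cube n (fun i => q.2 i * 2 ^ q.1) (2 ^ q.1)

theorem isCube_dyadicCube (q : ℤ × (Fin n → ℤ)) : IsCube (dyadicCube q) :=
  isCube_Cube _ (by positivity)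

theorem mem_dyadicCube {q : ℤ × (Fin n → ℤ)} {x : Fin n → ℝ} :
    x ∈ dyadicCube q ↔ ∀ i, ⌊x i / 2 ^ q.1⌋ = q.2 i := by
  have h : (0 : ℝ) < 2 ^ q.1 := by positivity
  simp only [dyadicCube, mem_Cube, Int.floor_eq_iff, le_div_iff₀ h, div_lt_iff₀ h, add_mul, one_mul]

theorem floor_div_two_zpow_add (t : ℝ) (j : ℤ) (d : ℕ) :
    ⌊t / 2 ^ (j + d)⌋ = ⌊t / 2 ^ j⌋ / 2 ^ d := by
  have h := Int.floor_div_natCast (t / 2 ^ j) (2 ^ d)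
  push_cast at h
  rwa [div_div, ← zpow_natCast, ← zpow_add₀ two_ne_zero] at h

theorem dyadicCube_subset_or_disjoint {q q' : ℤ × (Fin n → ℤ)} (h : q.1 ≤ q'.1) :
    dyadicCube q ⊆ dyadicCube q' ∨ Disjoint (dyadicCube q) (dyadicCube q') := by
  rw [or_iff_not_imp_right, not_disjoint_iff]
  rintro ⟨y, hy, hy'⟩ x hx
  obtain ⟨d, hd⟩ := Int.le.dest h
  rw [mem_dyadicCube] at *
  intro i
  rw [← hy' i, ← hd, floor_div_two_zpow_add, floor_div_two_zpow_add, hx i, hy i]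

theorem isLaminar_dyadicCube : IsLaminar (dyadicCube (n := n)) := fun q q' => by
  rcases le_total q.1 q'.1 with h | h
  · exact (dyadicCube_subset_or_disjoint h).imp_right .inr
  · exact .inr ((dyadicCube_subset_or_disjoint h).imp_right (·.symm))

theorem volume_Cube_le_mul {a a' : Fin n → ℝ} {l l' : ℝ} {c : ℝ≥0} (h : l' ≤ c * l) :
    volume (Cube n a' l') ≤ (c ^ n : ℝ≥0) * volume (Cube n a l) := by
  rw [volume_Cube, volume_Cube, coe_pow, ← mul_pow, ← ofReal_coe_nnreal,
    ← ofReal_mul c.coe_nonneg]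
  gcongr

theorem exists_two_zpow_mem_Icc {L : ℝ} (hL : 0 < L) : ∃ j : ℤ, (2 : ℝ) ^ j ∈ Icc L (2 * L) := by
  obtain ⟨j, hj, hj'⟩ := exists_mem_Ioc_zpow hL one_lt_two
  rw [zpow_add_one₀ two_ne_zero] at hj'
  exact ⟨j + 1, by rw [zpow_add_one₀ two_ne_zero]; constructor <;> linarith⟩

theorem exists_dyadicCube_superset_of_mem_Ico {L : ℝ} (hL : 0 < L) {S : Set (Fin n → ℝ)}
    (hS : ∀ z ∈ S, ∀ i, z i ∈ Ico 0 L) : ∃ q, S ⊆ dyadicCube q ∧ (2 : ℝ) ^ q.1 ≤ 2 * L := by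
  obtain ⟨j, hjL, hj⟩ := exists_two_zpow_mem_Icc hL
  refine ⟨(j, 0), fun z hz => mem_Cube.2 fun i => ?_, hj⟩
  obtain ⟨h0, hzL⟩ := hS z hz i
  simpa using ⟨h0, hzL.trans_le hjL⟩

theorem exists_dyadicCube_superset_of_mem_Ico_add {L : ℝ} (hL : 0 < L) (b : Fin n → ℤ)
    {S : Set (Fin n → ℝ)} (hS : ∀ z ∈ S, ∀ i, z i ∈ Ico (b i : ℝ) (b i + min L 1)) :
    ∃ q, S ⊆ dyadicCube q ∧ (2 : ℝ) ^ q.1 ≤ 2 * L := by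
  obtain ⟨j, hjL, hj⟩ := exists_two_zpow_mem_Icc hL
  have hmono : Monotone fun j : ℤ => (2 : ℝ) ^ j := zpow_right_mono₀ one_le_two
  have hmin : min L 1 ≤ (2 : ℝ) ^ min j 0 := by
    rw [hmono.map_min]
    simpa using min_le_min_right 1 hjL
  obtain ⟨d, hd⟩ := Int.le.dest (min_le_right j 0)
  have hcorner (i : Fin n) : ((b i * 2 ^ d : ℤ) : ℝ) * 2 ^ min j 0 = b i := by
    push_cast
    rw [mul_assoc, ← zpow_natCast, ← zpow_add₀ two_ne_zero, add_comm, hd, zpow_zero, mul_one]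
  refine ⟨(min j 0, fun i => b i * 2 ^ d), fun z hz => mem_Cube.2 fun i => ?_,
    (hmono (min_le_left j 0)).trans hj⟩
  obtain ⟨hz0, hz1⟩ := hS z hz i
  simp only [hcorner]
  exact ⟨hz0, hz1.trans_le (by gcongr)⟩

end DyadicCubes

section Digits

variable {n k m : ℕ}

theorem digit_eq_of_mem_Ico {j : ℕ} {d : ℤ} {t : ℝ} (ht : t * 2 ^ (k * j) ∈ Ico (d : ℝ) (d + 1))
    (hd0 : 0 ≤ d) (hd : d < 2 ^ k) : digit k j t = d := by
  rw [digit, Int.floor_eq_iff.2 ht, Int.emod_eq_of_lt hd0 hd]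

/-- The offset `2 ^ (-k (m - 1) - 1)` of the cube `Q1 n k m` from the origin. -/
def offset (k m : ℕ) : ℝ := 2 ^ (-(k * (m - 1) : ℤ) - 1)

theorem offset_pos (k m : ℕ) : 0 < offset k m := by
  unfold offset
  positivity

theorem two_zpow_eq_offset_mul (k m : ℕ) :
    (2 : ℝ) ^ (-(k * m : ℤ)) = offset k m * 2 ^ (1 - k : ℤ) := by
  rw [offset, ← zpow_add₀ two_ne_zero]
  ring_nf

theorem offset_le_quarter (hk : 1 ≤ k) (hm : 2 ≤ m) : offset k m ≤ 1 / 4 := by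
  calc offset k m ≤ 2 ^ (-2 : ℤ) := by
        unfold offset
        gcongr
        · norm_num
        · nlinarith
    _ = 1 / 4 := by norm_num

theorem offset_le_of_lt {m' : ℕ} (hk : 3 ≤ k) (h : m < m') : offset k m' ≤ offset k m / 8 := by
  calc offset k m' ≤ 2 ^ (-(k * (m - 1) : ℤ) - 1 + -3) := by
        unfold offset
        gcongr
        · norm_num
        · nlinarith
    _ = offset k m / 8 := by
        rw [zpow_add₀ two_ne_zero, offset]
        norm_num
        ring

theorem side_le_offset (hk : 1 ≤ k) (m : ℕ) : (2 : ℝ) ^ (-(k * m : ℤ)) ≤ offset k m := by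
  rw [two_zpow_eq_offset_mul]
  exact mul_le_of_le_one_right (offset_pos k m).le (zpow_le_one_of_nonpos₀ one_le_two (by lia))

theorem offset_mul_two_pow (hk : 1 ≤ k) (m : ℕ) : offset k m * 2 ^ (k * m) = 2 ^ (k - 1) := by
  rw [offset, ← zpow_natCast, ← zpow_add₀ two_ne_zero, ← zpow_natCast, Nat.cast_sub hk]
  push_cast
  ring_nf

theorem two_mul_offset_mul_two_pow_le_one {j : ℕ} (hj : j < m) :
    2 * offset k m * 2 ^ (k * j) ≤ 1 := by
  have hkj : (k * j : ℤ) ≤ k * (m - 1) := by gcongr; lia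
  rw [offset, ← zpow_natCast, ← zpow_one_add₀ two_ne_zero, ← zpow_add₀ two_ne_zero]
  refine zpow_le_one_of_nonpos₀ one_le_two ?_
  push_cast
  linarith

theorem mem_Q1 {x : Fin n → ℝ} :
    x ∈ Q1 n k m ↔ ∀ i, x i ∈ Ico (offset k m) (offset k m + 2 ^ (-(k * m : ℤ))) :=
  mem_Cube

theorem Q1_subset_Omega (hk : 1 ≤ k) (hm : 1 ≤ m) : Q1 n k m ⊆ Omega n k m := by
  intro x hx
  have hpos (i : Fin n) : 0 ≤ x i := (offset_pos k m).le.trans (mem_Q1.1 hx i).1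
  have hlt (i : Fin n) (j : ℕ) (hj : j < m) : x i * 2 ^ (k * j) < 1 := by
    calc x i * 2 ^ (k * j) < 2 * offset k m * 2 ^ (k * j) := by
          gcongr
          linarith [(mem_Q1.1 hx i).2, side_le_offset hk m]
      _ ≤ 1 := two_mul_offset_mul_two_pow_le_one hj
  refine ⟨fun i => ⟨hpos i, by simpa using hlt i 0 hm⟩, fun i => ⟨fun j _ hj => ?_, ?_⟩⟩
  · have hdigit : digit k j (x i) = 0 :=
      digit_eq_of_mem_Ico ⟨by simpa using hpos i, by simpa using hlt i j hj⟩ le_rfl (by positivity)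
    rw [hdigit]
    positivity
  · refine digit_eq_of_mem_Ico ?_ (by positivity) (pow_lt_pow_right₀ one_lt_two (by lia))
    have hside : (2 : ℝ) ^ (-(k * m : ℤ)) * 2 ^ (k * m) = 1 := by
      rw [← zpow_natCast, ← zpow_add₀ two_ne_zero]
      simp
    push_cast
    rw [← hside, ← offset_mul_two_pow hk m, ← add_mul]
    exact ⟨mul_le_mul_of_nonneg_right (mem_Q1.1 hx i).1 (by positivity),
      mul_lt_mul_of_pos_right (mem_Q1.1 hx i).2 (by positivity)⟩

theorem pairwise_disjoint_Omega [NeZero n] (k : ℕ) :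
    Pairwise (onFun Disjoint fun m => Omega n k (m + 1)) := by
  rw [pairwise_disjoint_on]
  intro m m' h
  rw [disjoint_left]
  rintro x ⟨-, hx⟩ ⟨-, hx'⟩
  exact ((hx' 0).1 (m + 1) (by lia) (by lia)).ne (hx 0).2

theorem wk_eq_of_mem_Q1 [NeZero n] {x : Fin n → ℝ} (hk : 1 ≤ k) (hx : x ∈ Q1 n k (m + 1)) :
    wk n k x = (2 ^ (k * n) / (2 ^ ((k - 1) * n) + 1)) ^ (m + 1) :=
  stepFn_eq_of_mem (E := fun m => Omega n k (m + 1))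
    (a := fun m => (2 ^ (k * n) / (2 ^ ((k - 1) * n) + 1)) ^ (m + 1)) (pairwise_disjoint_Omega k)
    (Q1_subset_Omega hk (by lia) hx)

end Digits

section Support

variable {n : ℕ} {e e' : ℕ × ℕ} {x y : Fin n → ℝ}

/-- The constituent cube `2⃗^k + Q_1^m(k)` of the support of `bigW n`, where
`(k, m) = (e.1 + 3, e.2 + 3)`. -/
def suppCube (n : ℕ) (e : ℕ × ℕ) : Set (Fin n → ℝ) :=
  {x | (fun i => x i - 2 ^ (e.1 + 3)) ∈ Q1 n (e.1 + 3) (e.2 + 3)}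

/-- The value of `bigW n` on `suppCube n e`. -/
def height (n : ℕ) (e : ℕ × ℕ) : ℝ≥0∞ :=
  Ak n (e.1 + 3) * (2 ^ ((e.1 + 3) * n) / (2 ^ ((e.1 + 3 - 1) * n) + 1)) ^ (e.2 + 3)

theorem height_ne_top (n : ℕ) (e : ℕ × ℕ) : height n e ≠ ∞ := by
  have hpow (j : ℕ) : (2 : ℝ≥0∞) ^ j ≠ ∞ := pow_ne_top ofNat_ne_top
  exact mul_ne_top (mul_ne_top (hpow _) (pow_ne_top (add_ne_top.2 ⟨hpow _, one_ne_top⟩)))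
    (pow_ne_top (div_ne_top (hpow _) (by simp)))

theorem isCube_suppCube (e : ℕ × ℕ) : IsCube (suppCube n e) := by
  refine ⟨fun _ => 2 ^ (e.1 + 3) + offset (e.1 + 3) (e.2 + 3),
    2 ^ (-((e.1 + 3 : ℕ) * (e.2 + 3 : ℕ) : ℤ)), by positivity, ?_⟩
  ext x
  simp only [suppCube, mem_ofPred_eq, mem_Q1, mem_Ico, mem_Cube, le_sub_iff_add_le',
    sub_lt_iff_lt_add', add_assoc]

theorem mem_Ico_of_mem_suppCube (hx : x ∈ suppCube n e) (i : Fin n) :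
    x i ∈ Ico (2 ^ (e.1 + 3) + offset (e.1 + 3) (e.2 + 3))
      (2 ^ (e.1 + 3) + 5 / 4 * offset (e.1 + 3) (e.2 + 3)) := by
  obtain ⟨h1, h2⟩ := mem_Q1.1 hx i
  rw [two_zpow_eq_offset_mul] at h2
  have hside : (2 : ℝ) ^ (1 - (e.1 + 3 : ℕ) : ℤ) ≤ 1 / 4 :=
    (zpow_le_zpow_right₀ one_le_two (by lia : _ ≤ (-2 : ℤ))).trans (by norm_num)
  have := mul_le_mul_of_nonneg_left hside (offset_pos (e.1 + 3) (e.2 + 3)).le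
  constructor <;> linarith

theorem mem_Ioo_of_mem_suppCube (hx : x ∈ suppCube n e) (i : Fin n) :
    x i ∈ Ioo (2 ^ (e.1 + 3)) (2 ^ (e.1 + 3) + 1 / 2) := by
  obtain ⟨h1, h2⟩ := mem_Ico_of_mem_suppCube hx i
  have := offset_pos (e.1 + 3) (e.2 + 3)
  have : offset (e.1 + 3) (e.2 + 3) ≤ 1 / 4 := offset_le_quarter (by lia) (by lia)
  constructor <;> linarith

theorem two_pow_lt_sub_of_fst_lt (hx : x ∈ suppCube n e) (hy : y ∈ suppCube n e')
    (he : e.1 < e'.1) (i : Fin n) : 2 ^ (e.1 + 3) - 1 / 2 < y i - x i := by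
  have h : (2 : ℝ) ^ (e.1 + 3 + 1) ≤ 2 ^ (e'.1 + 3) :=
    pow_le_pow_right₀ one_le_two (by lia)
  rw [pow_succ] at h
  linarith [(mem_Ioo_of_mem_suppCube hx i).2, (mem_Ioo_of_mem_suppCube hy i).1]

theorem offset_lt_sub_of_snd_lt (hx : x ∈ suppCube n e) (hy : y ∈ suppCube n e')
    (hfst : e.1 = e'.1) (hsnd : e.2 < e'.2) (i : Fin n) :
    5 / 8 * offset (e.1 + 3) (e.2 + 3) < x i - y i := by
  have h : offset (e.1 + 3) (e'.2 + 3) ≤ offset (e.1 + 3) (e.2 + 3) / 8 :=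
    offset_le_of_lt (by lia) (by lia)
  have := offset_pos (e.1 + 3) (e.2 + 3)
  have hyi := (mem_Ico_of_mem_suppCube hy i).2
  rw [← hfst] at hyi
  linarith [(mem_Ico_of_mem_suppCube hx i).1]

theorem eight_le_two_pow_add_three (k : ℕ) : (8 : ℝ) ≤ 2 ^ (k + 3) := by
  rw [pow_add]
  linarith [one_le_pow₀ (n := k) (one_le_two (α := ℝ))]

variable [NeZero n]

theorem pairwise_disjoint_suppCube : Pairwise (onFun Disjoint (suppCube n)) := by
  have hlt (e e' : ℕ × ℕ) (h : toLex e < toLex e') : Disjoint (suppCube n e) (suppCube n e') := by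
    refine disjoint_left.2 fun x hx hx' => ?_
    rcases Prod.Lex.toLex_lt_toLex.1 h with h1 | ⟨h1, h2⟩
    · linarith [two_pow_lt_sub_of_fst_lt hx hx' h1 0, eight_le_two_pow_add_three e.1]
    · linarith [offset_lt_sub_of_snd_lt hx hx' h1 h2 0, offset_pos (e.1 + 3) (e.2 + 3)]
  intro e e' he
  rcases lt_or_gt_of_ne (toLex.injective.ne he) with h | h
  · exact hlt e e' h
  · exact (hlt e' e h).symm

theorem bigW_eq_of_mem_suppCube (hx : x ∈ suppCube n e) : bigW n x = height n e := by
  have hGamma : (fun i => x i - 2 ^ (e.1 + 3)) ∈ Gamma n (e.1 + 3) := mem_iUnion_of_mem e.2 hx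
  rw [bigW, tsum_eq_single e.1, indicator_of_mem hGamma, wk_eq_of_mem_Q1 (by lia) hx, height]
  refine fun k hk => indicator_of_notMem (fun hxk => ?_) _
  obtain ⟨m, hm⟩ := mem_iUnion.1 hxk
  have hne : (k, m) ≠ e := by
    rintro rfl
    exact hk rfl
  exact disjoint_left.1 (pairwise_disjoint_suppCube hne) hm hx

theorem bigW_eq_stepFn : bigW n = stepFn (suppCube n) (height n) := by
  funext x
  by_cases hx : x ∈ ⋃ e, suppCube n e
  · obtain ⟨e, he⟩ := mem_iUnion.1 hx
    rw [bigW_eq_of_mem_suppCube he, stepFn_eq_of_mem pairwise_disjoint_suppCube he]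
  · rw [stepFn_eq_zero hx]
    refine ENNReal.tsum_eq_zero.2 fun k => indicator_of_notMem (fun hxk => hx ?_) _
    obtain ⟨m, hm⟩ := mem_iUnion.1 hxk
    exact mem_iUnion_of_mem (k, m) hm

end Support

section Crossings

variable {n : ℕ} {a x y : Fin n → ℝ} {l : ℝ} {e e' : ℕ × ℕ}

theorem sub_lt_of_mem_Cube (hx : x ∈ Cube n a l) (hy : y ∈ Cube n a l) (i : Fin n) :
    x i - y i < l := by
  linarith [(mem_Cube.1 hx i).2, (mem_Cube.1 hy i).1]

variable [NeZero n]

theorem exists_dyadicCube_superset_of_fst_lt (hx : x ∈ Cube n a l ∩ suppCube n e)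
    (hy : y ∈ Cube n a l ∩ suppCube n e') (h : e.1 < e'.1) :
    ∃ q, Cube n a l ∩ ⋃ e, suppCube n e ⊆ dyadicCube q ∧ (2 : ℝ) ^ q.1 ≤ 6 * l := by
  have hl : (2 : ℝ) ^ (e.1 + 3) - 1 / 2 < l :=
    (two_pow_lt_sub_of_fst_lt hx.2 hy.2 h 0).trans (sub_lt_of_mem_Cube hy.1 hx.1 0)
  have h8 := eight_le_two_pow_add_three e.1
  obtain ⟨q, hq, hq'⟩ := exists_dyadicCube_superset_of_mem_Ico (L := 3 * l) (by linarith)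
    (S := Cube n a l ∩ ⋃ e, suppCube n e) fun z ⟨hzQ, hz⟩ i => by
      obtain ⟨d, hd⟩ := mem_iUnion.1 hz
      have hxi := (mem_Ioo_of_mem_suppCube hx.2 i).2
      have hzi := (mem_Ioo_of_mem_suppCube hd i).1
      have hzx := sub_lt_of_mem_Cube hzQ hx.1 i
      have := eight_le_two_pow_add_three d.1
      constructor <;> linarith
  exact ⟨q, hq, by linarith⟩

theorem exists_dyadicCube_superset_of_snd_lt (hx : x ∈ Cube n a l ∩ suppCube n e)
    (hy : y ∈ Cube n a l ∩ suppCube n e') (hfst : e.1 = e'.1) (hsnd : e.2 < e'.2)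
    (hQ : ∀ d, (Cube n a l ∩ suppCube n d).Nonempty → d.1 = e.1) :
    ∃ q, Cube n a l ∩ ⋃ e, suppCube n e ⊆ dyadicCube q ∧ (2 : ℝ) ^ q.1 ≤ 6 * l := by
  have hl : 5 / 8 * offset (e.1 + 3) (e.2 + 3) < l :=
    (offset_lt_sub_of_snd_lt hx.2 hy.2 hfst hsnd 0).trans (sub_lt_of_mem_Cube hx.1 hy.1 0)
  have hpos := offset_pos (e.1 + 3) (e.2 + 3)
  obtain ⟨q, hq, hq'⟩ := exists_dyadicCube_superset_of_mem_Ico_add (L := 3 * l) (by linarith)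
    (fun _ => 2 ^ (e.1 + 3)) (S := Cube n a l ∩ ⋃ e, suppCube n e) fun z ⟨hzQ, hz⟩ i => by
      obtain ⟨d, hd⟩ := mem_iUnion.1 hz
      have hzi := mem_Ioo_of_mem_suppCube hd i
      rw [hQ d ⟨z, hzQ, hd⟩] at hzi
      have hxi := (mem_Ico_of_mem_suppCube hx.2 i).2
      have hzx := sub_lt_of_mem_Cube hzQ hx.1 i
      push_cast
      refine ⟨hzi.1.le, ?_⟩
      rw [← sub_lt_iff_lt_add', lt_min_iff]
      constructor <;> linarith [hzi.2]
  exact ⟨q, hq, by linarith⟩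

theorem exists_dyadicCube_superset_of_crossing (hne : e ≠ e')
    (hx : (Cube n a l ∩ suppCube n e).Nonempty) (hy : (Cube n a l ∩ suppCube n e').Nonempty) :
    ∃ q, Cube n a l ∩ ⋃ e, suppCube n e ⊆ dyadicCube q ∧ (2 : ℝ) ^ q.1 ≤ 6 * l := by
  by_cases hfst : ∀ d, (Cube n a l ∩ suppCube n d).Nonempty → d.1 = e.1
  · have hfst' : e'.1 = e.1 := hfst e' hy
    obtain ⟨x, hx⟩ := hx
    obtain ⟨y, hy⟩ := hy
    rcases lt_or_gt_of_ne fun h => hne (Prod.ext hfst'.symm h) with hsnd | hsnd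
    · exact exists_dyadicCube_superset_of_snd_lt hx hy hfst'.symm hsnd hfst
    · exact exists_dyadicCube_superset_of_snd_lt hy hx hfst' hsnd (hfst' ▸ hfst)
  · push Not at hfst
    obtain ⟨d, ⟨z, hz⟩, hd⟩ := hfst
    obtain ⟨x, hx⟩ := hx
    rcases lt_or_gt_of_ne hd with h | h
    · exact exists_dyadicCube_superset_of_fst_lt hz hx h
    · exact exists_dyadicCube_superset_of_fst_lt hx hz h

theorem coversCrossings_dyadicCube_suppCube :
    CoversCrossings (dyadicCube (n := n)) (suppCube n) (6 ^ n) := by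
  rintro _ ⟨a, l, -, rfl⟩ e e' hne hx hy
  obtain ⟨q, hq, hql⟩ := exists_dyadicCube_superset_of_crossing hne hx hy
  exact ⟨q, hq, volume_Cube_le_mul hql⟩

end Crossings

/-- For `n ≥ 1`, `p ∈ (1,∞)` and the weight `v = (Mw/w)^p w` on `supp w`
(`v = 0` off `supp w`), there is a constant `C = C(n,p)` such that
`‖Mf‖_{L^p(w)} ≤ C ‖f‖_{L^p(v)}` for every measurable `f` supported in `supp w`. -/
theorem maximal_bounded_Lpv_to_Lpw (n : ℕ) (hn : 1 ≤ n) (p : ℝ) (hp : 1 < p) :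
    ∃ C : ℝ≥0∞, C ≠ ∞ ∧
      ∀ f : (Fin n → ℝ) → ℝ≥0∞, Measurable f →
        (∀ x, bigW n x = 0 → f x = 0) →
        ∫⁻ x, MaxFn f x ^ p * bigW n x
          ≤ C ^ p * ∫⁻ x, f x ^ p *
              (if bigW n x = 0 then 0
               else (MaxFn (bigW n) x / bigW n x) ^ p * bigW n x) := by
  have : NeZero n := ⟨by lia⟩
  obtain ⟨C, hC, h⟩ := maximal_bounded_Lpv_to_Lpw_general (pairwise_disjoint_suppCube (n := n))
    isCube_suppCube isLaminar_dyadicCube isCube_dyadicCube coversCrossings_dyadicCube_suppCube hp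
  rw [bigW_eq_stepFn]
  exact ⟨C, hC, h (height n) (height_ne_top n)⟩
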